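/- Let M, C_1, …, C_K, Z_1, …, Z_{k−1}, Z_k be finite discrete random variables with C = (C_1, …, C_K), and fix k ∈ {1, …, K}. If (Z_1, …, Z_{k−1}, C) → (C_k, M) → Z_k forms a Markov chain, then I(M; Z_k | Z_1, …, Z_{k−1}, C) ≤ I(M; Z_k | C_k). -/

import Mathlib

open scoped Classical

/-- Probability of an event under pmf `p` on a finite sample space. -/
noncomputable def pr {Ω : Type*} [Fintype Ω] (p : Ω → ℝ) (E : Ω → Prop) : ℝ :=
  ∑ ω, if E ω then p ω else 0

/-- Shannon entropy of a finite discrete random variable `X`. -/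
noncomputable def entropy {Ω α : Type*} [Fintype Ω] [Fintype α] (p : Ω → ℝ) (X : Ω → α) : ℝ :=
  -∑ x, pr p (fun ω => X ω = x) * Real.log (pr p (fun ω => X ω = x))

/-- Conditional entropy `H(X|Y) = H(X,Y) - H(Y)`. -/
noncomputable def condEntropy {Ω α β : Type*} [Fintype Ω] [Fintype α] [Fintype β]
    (p : Ω → ℝ) (X : Ω → α) (Y : Ω → β) : ℝ :=
  entropy p (fun ω => (X ω, Y ω)) - entropy p Y

/-- Mutual information `I(X;Y) = H(X) + H(Y) - H(X,Y)`. -/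
noncomputable def mutualInfo {Ω α β : Type*} [Fintype Ω] [Fintype α] [Fintype β]
    (p : Ω → ℝ) (X : Ω → α) (Y : Ω → β) : ℝ :=
  entropy p X + entropy p Y - entropy p (fun ω => (X ω, Y ω))

/-- Conditional mutual information `I(X;Y|Z) = H(X,Z) + H(Y,Z) - H(X,Y,Z) - H(Z)`. -/
noncomputable def condMutualInfo {Ω α β γ : Type*} [Fintype Ω] [Fintype α] [Fintype β] [Fintype γ]
    (p : Ω → ℝ) (X : Ω → α) (Y : Ω → β) (Z : Ω → γ) : ℝ :=
  entropy p (fun ω => (X ω, Z ω)) + entropy p (fun ω => (Y ω, Z ω))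
    - entropy p (fun ω => (X ω, Y ω, Z ω)) - entropy p Z

/-- `A → D → B` Markov chain: `A` and `B` are conditionally independent given `D`. -/
def CondIndep {Ω α β δ : Type*} [Fintype Ω]
    (p : Ω → ℝ) (A : Ω → α) (B : Ω → β) (D : Ω → δ) : Prop :=
  ∀ (a : α) (b : β) (d : δ),
    pr p (fun ω => A ω = a ∧ B ω = b ∧ D ω = d) * pr p (fun ω => D ω = d)
      = pr p (fun ω => A ω = a ∧ D ω = d) * pr p (fun ω => B ω = b ∧ D ω = d)

lemma aux_sum {Ω α : Type*} [Fintype Ω] [Fintype α] (p : Ω → ℝ) (X : Ω → α) (g : α → ℝ) :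
    ∑ x, pr p (fun ω => X ω = x) * g x = ∑ ω, p ω * g (X ω) := by
  unfold pr
  simp_rw [Finset.sum_mul]
  rw [Finset.sum_comm]
  refine Finset.sum_congr rfl fun ω _ => ?_
  rw [Finset.sum_eq_single (X ω)]
  · simp
  · intro b _ hb
    rw [if_neg (fun h => hb h.symm), zero_mul]
  · simp

lemma aux_entropy {Ω α : Type*} [Fintype Ω] [Fintype α] (p : Ω → ℝ) (X : Ω → α) :
    entropy p X = -∑ ω, p ω * Real.log (pr p (fun ω' => X ω' = X ω)) := by
  unfold entropy
  rw [aux_sum p X (fun x => Real.log (pr p (fun ω' => X ω' = x)))]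

lemma aux_nonneg {Ω : Type*} [Fintype Ω] (p : Ω → ℝ) (hp : ∀ ω, 0 ≤ p ω) (E : Ω → Prop) :
    0 ≤ pr p E := by
  unfold pr
  refine Finset.sum_nonneg fun ω _ => ?_
  split_ifs
  · exact hp ω
  · exact le_rfl

lemma aux_pos {Ω : Type*} [Fintype Ω] (p : Ω → ℝ) (hp : ∀ ω, 0 ≤ p ω) (E : Ω → Prop)
    (ω : Ω) (hE : E ω) (h : 0 < p ω) : 0 < pr p E := by
  unfold pr
  refine Finset.sum_pos' (fun ω _ => ?_) ⟨ω, Finset.mem_univ _, ?_⟩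
  · split_ifs
    · exact hp ω
    · exact le_rfl
  · rw [if_pos hE]; exact h

lemma aux_marg {Ω α β : Type*} [Fintype Ω] [Fintype α] (p : Ω → ℝ) (Y : Ω → α) (D : Ω → β)
    (d : β) : ∑ y, pr p (fun ω => (Y ω, D ω) = (y, d)) = pr p (fun ω => D ω = d) := by
  unfold pr
  rw [Finset.sum_comm]
  refine Finset.sum_congr rfl fun ω _ => ?_
  rw [Finset.sum_eq_single (Y ω)]
  · by_cases h : D ω = d
    · rw [if_pos h, if_pos (by show (Y ω, D ω) = (Y ω, d); rw [h])]
    · rw [if_neg h, if_neg (fun e => h (Prod.mk.inj e).2)]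
  · intro b _ hb
    rw [if_neg (fun e => hb (Prod.mk.inj e).1.symm)]
  · simp

lemma aux_total {Ω α : Type*} [Fintype Ω] [Fintype α] (p : Ω → ℝ) (X : Ω → α) :
    ∑ x, pr p (fun ω => X ω = x) = ∑ ω, p ω := by
  have := aux_sum p X (fun _ => 1)
  simpa using this

/-- Conditioning on more reduces entropy: `H(Y|W) ≤ H(Y|f(W))`. -/
lemma aux_condEntropy {Ω α β δ : Type*} [Fintype Ω] [Fintype α] [Fintype β] [Fintype δ]
    (p : Ω → ℝ) (hp : ∀ ω, 0 ≤ p ω) (hp1 : ∑ ω, p ω = 1)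
    (Y : Ω → α) (W : Ω → β) (f : β → δ) :
    entropy p (fun ω => (Y ω, W ω)) - entropy p W
      ≤ entropy p (fun ω => (Y ω, f (W ω))) - entropy p (fun ω => f (W ω)) := by
  let g : α × β → ℝ := fun x =>
    pr p (fun ω => (Y ω, f (W ω)) = (x.1, f x.2)) * pr p (fun ω => W ω = x.2)
      / (pr p (fun ω => (Y ω, W ω) = x) * pr p (fun ω => f (W ω) = f x.2))
  have hg : ∑ ω, p ω * g (Y ω, W ω) ≤ 1 := by
    rw [← aux_sum p (fun ω => (Y ω, W ω)) g, Fintype.sum_prod_type_right, ← hp1,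
      ← aux_total p W]
    refine Finset.sum_le_sum fun w _ => ?_
    have hd := aux_nonneg p hp (fun ω => f (W ω) = f w)
    have hw := aux_nonneg p hp (fun ω => W ω = w)
    calc _ ≤ ∑ y, pr p (fun ω => (Y ω, f (W ω)) = (y, f w)) *
            (pr p (fun ω => W ω = w) / pr p (fun ω => f (W ω) = f w)) := by
          refine Finset.sum_le_sum fun y _ => ?_
          have hyd := aux_nonneg p hp (fun ω => (Y ω, f (W ω)) = (y, f w))
          rcases (aux_nonneg p hp (fun ω => (Y ω, W ω) = (y, w))).eq_or_lt with h | h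
          · rw [← h, zero_mul]; positivity
          · apply le_of_eq
            simp only [g]
            rw [← mul_div_assoc, ← mul_div_assoc, mul_div_mul_left _ _ h.ne']
      _ = pr p (fun ω => f (W ω) = f w) *
            (pr p (fun ω => W ω = w) / pr p (fun ω => f (W ω) = f w)) := by
          rw [← Finset.sum_mul, aux_marg p Y (fun ω => f (W ω)) (f w)]
      _ ≤ _ := by
          rcases hd.eq_or_lt with h | h
          · rw [← h, zero_mul]; exact hw
          · rw [mul_div_cancel₀ _ h.ne']
  have key : ∑ ω, p ω * (Real.log (pr p (fun ω' => (Y ω', f (W ω')) = (Y ω, f (W ω))))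
      + Real.log (pr p (fun ω' => W ω' = W ω))
      - Real.log (pr p (fun ω' => (Y ω', W ω') = (Y ω, W ω)))
      - Real.log (pr p (fun ω' => f (W ω') = f (W ω)))) ≤ ∑ ω, p ω * (g (Y ω, W ω) - 1) := by
    refine Finset.sum_le_sum fun ω _ => ?_
    rcases (hp ω).eq_or_lt with h | h
    · rw [← h, zero_mul, zero_mul]
    · refine mul_le_mul_of_nonneg_left ?_ h.le
      have h1 := aux_pos p hp (fun ω' => (Y ω', f (W ω')) = (Y ω, f (W ω))) ω rfl h
      have h2 := aux_pos p hp (fun ω' => W ω' = W ω) ω rfl h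
      have h3 := aux_pos p hp (fun ω' => (Y ω', W ω') = (Y ω, W ω)) ω rfl h
      have h4 := aux_pos p hp (fun ω' => f (W ω') = f (W ω)) ω rfl h
      have h5 := Real.log_le_sub_one_of_pos (div_pos (mul_pos h1 h2) (mul_pos h3 h4))
      rw [Real.log_div (mul_pos h1 h2).ne' (mul_pos h3 h4).ne', Real.log_mul h1.ne' h2.ne',
        Real.log_mul h3.ne' h4.ne'] at h5
      simp only [g]
      linarith
  simp only [mul_sub, mul_add, Finset.sum_sub_distrib, Finset.sum_add_distrib, mul_one] at key
  rw [aux_entropy, aux_entropy, aux_entropy, aux_entropy]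
  linarith

lemma aux_main {Ω μ α β δ : Type*} [Fintype Ω] [Fintype μ] [Fintype α] [Fintype β] [Fintype δ]
    (p : Ω → ℝ) (hp : ∀ ω, 0 ≤ p ω) (hp1 : ∑ ω, p ω = 1)
    (M : Ω → μ) (Y : Ω → α) (W : Ω → β) (f : β → δ)
    (hM : CondIndep p W Y (fun ω => (f (W ω), M ω))) :
    condMutualInfo p M Y W ≤ condMutualInfo p M Y (fun ω => f (W ω)) := by
  have h1 := aux_condEntropy p hp hp1 Y W f
  have h2 : entropy p (fun ω => (M ω, Y ω, W ω)) + entropy p (fun ω => (M ω, f (W ω)))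
      = entropy p (fun ω => (M ω, W ω)) + entropy p (fun ω => (M ω, Y ω, f (W ω))) := by
    rw [aux_entropy, aux_entropy, aux_entropy, aux_entropy, ← neg_add, ← neg_add,
      ← Finset.sum_add_distrib, ← Finset.sum_add_distrib]
    congr 1
    refine Finset.sum_congr rfl fun ω _ => ?_
    rcases (hp ω).eq_or_lt with h | h
    · rw [← h]; simp
    · have e := hM (W ω) (Y ω) (f (W ω), M ω)
      have e1 : (fun ω' => W ω' = W ω ∧ Y ω' = Y ω ∧ (f (W ω'), M ω') = (f (W ω), M ω))
          = (fun ω' => (M ω', Y ω', W ω') = (M ω, Y ω, W ω)) := by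
        funext ω'; simp only [Prod.mk.injEq, eq_iff_iff]; grind
      have e2 : (fun ω' => (f (W ω'), M ω') = (f (W ω), M ω))
          = (fun ω' => (M ω', f (W ω')) = (M ω, f (W ω))) := by
        funext ω'; simp only [Prod.mk.injEq, eq_iff_iff]; grind
      have e3 : (fun ω' => W ω' = W ω ∧ (f (W ω'), M ω') = (f (W ω), M ω))
          = (fun ω' => (M ω', W ω') = (M ω, W ω)) := by
        funext ω'; simp only [Prod.mk.injEq, eq_iff_iff]; grind
      have e4 : (fun ω' => Y ω' = Y ω ∧ (f (W ω'), M ω') = (f (W ω), M ω))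
          = (fun ω' => (M ω', Y ω', f (W ω')) = (M ω, Y ω, f (W ω))) := by
        funext ω'; simp only [Prod.mk.injEq, eq_iff_iff]; grind
      rw [e1, e2, e3, e4] at e
      have p1 := aux_pos p hp (fun ω' => (M ω', Y ω', W ω') = (M ω, Y ω, W ω)) ω rfl h
      have p2 := aux_pos p hp (fun ω' => (M ω', f (W ω')) = (M ω, f (W ω))) ω rfl h
      have p3 := aux_pos p hp (fun ω' => (M ω', W ω') = (M ω, W ω)) ω rfl h
      have p4 := aux_pos p hp
        (fun ω' => (M ω', Y ω', f (W ω')) = (M ω, Y ω, f (W ω))) ω rfl h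
      rw [← mul_add, ← mul_add, ← Real.log_mul p1.ne' p2.ne', ← Real.log_mul p3.ne' p4.ne', e]
  unfold condMutualInfo
  linarith

/-- for a fixed frame `k`, if `(Z₁,…,Z_{k-1}, C) → (C_k, M) → Z_k` is a
Markov chain then `I(M; Z_k | Z₁,…,Z_{k-1}, C) ≤ I(M; Z_k | C_k)`. -/
theorem per_term_leakage_bound
    {Ω 𝕄 γ ζ : Type*} [Fintype Ω] [Fintype 𝕄] [Fintype γ] [Fintype ζ]
    (p : Ω → ℝ) (hp : ∀ ω, 0 ≤ p ω) (hp1 : ∑ ω, p ω = 1)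
    (K : ℕ) (hK : 1 ≤ K)
    (M : Ω → 𝕄) (C : Fin K → Ω → γ) (Z : Fin K → Ω → ζ)
    (k : Fin K)
    (hMarkov :
      CondIndep p
        (fun ω => ((fun i : Fin (k : ℕ) => Z ⟨i, lt_trans i.isLt k.isLt⟩ ω),
                   (fun i : Fin K => C i ω)))
        (Z k)
        (fun ω => (C k ω, M ω))) :
    condMutualInfo p M (Z k)
        (fun ω => ((fun i : Fin (k : ℕ) => Z ⟨i, lt_trans i.isLt k.isLt⟩ ω),
                   (fun i : Fin K => C i ω)))
      ≤ condMutualInfo p M (Z k) (C k) := by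
  have h := aux_main p hp hp1 M (Z k)
    (fun ω => ((fun i : Fin (k : ℕ) => Z ⟨i, lt_trans i.isLt k.isLt⟩ ω),
                   (fun i : Fin K => C i ω)))
    (fun w : (Fin (k : ℕ) → ζ) × (Fin K → γ) => w.2 k) hMarkov
  exact h
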